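/- arXiv:2308.08522 — 4 statements merged into one kernel-verified Lean document; each statement's English description precedes it below -/
import Mathlib

section
/- Let 1 ≤ L ≤ K and let w ∈ [0,1]^K with Σ_{k=1}^K w_k = 1 satisfy w_i ≤ w_{i+1} for all i ∈ {1,…,K−1} and w_1 = w_2 = … = w_{K−L} = 0 (a risk-affine preference vector with at most L nonzero entries). Then for every feasible solution x ∈ X, OWAR_w(x) = min over all L-element subsets {s_1, …, s_L} ⊆ {1,…,K} and all permutations π of {1,…,L} of Σ_{k=1}^L w_{π(k)+K−L} · r_{s_k}(x). -/
/-!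
The sum over all `K` positions only sees the last `L` of them, since the weights vanish elsewhere.
Any choice of `L` distinct scenarios assigned to these `L` positions extends to a permutation `σ` of
all `K` scenarios (symmetric groups are multiply transitive), so every competing value has the form
`∑ k, w k * r (σ k)`. As the weights increase while the sorted regrets decrease, the rearrangement
inequality shows that the sorted order minimises such sums; it is attained by taking the `L`
scenarios of smallest regret with the identity permutation.
-/

/-- A sum weighted by `w` reduces to the range of `e` when `w` vanishes off that range. -/
lemma sum_eq_sum_comp_of_weight_zero {K L : ℕ} (e : Fin L ↪ Fin K) (w g : Fin K → ℝ)
    (h : ∀ k, k ∉ Set.range e → w k = 0) :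
    ∑ k, w k * g k = ∑ j, w (e j) * g (e j) := by
  symm
  apply Finset.sum_of_injOn e e.injective.injOn (by simp) _ (by simp)
  intro k _ hk
  rw [h k (by simpa using hk), zero_mul]

/-- An injective family of scenarios placed at the positions `e j` extends to a permutation. -/
lemma exists_perm_comp_eq {K L : ℕ} (e s : Fin L ↪ Fin K) :
    ∃ σ : Equiv.Perm (Fin K), ∀ j, σ (e j) = s j := by
  have := Equiv.Perm.isMultiplyPretransitive (Fin K) L
  obtain ⟨σ, hσ⟩ := MulAction.exists_smul_eq (Equiv.Perm (Fin K)) e s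
  exact ⟨σ, fun j => by simpa using DFunLike.congr_fun hσ j⟩


/-- For a risk-affine weight vector with at most L nonzero entries (the first
K−L entries are zero), OWAR_w(x) is the minimum over all choices of L distinct scenarios
s_1,…,s_L ∈ {1,…,K} and all permutations τ of {1,…,L} of Σ_{k∈[L]} w_{τ(k)+K−L} · r_{s_k}(x). -/
theorem owar_riskAffine_L_nonzero_entries
    (n K L : ℕ) (hn : 0 < n) (hL : 1 ≤ L) (hLK : L ≤ K)
    (X : Finset (Fin n → ℝ)) (hX : X.Nonempty)
    (hbin : ∀ x ∈ X, ∀ i, x i = 0 ∨ x i = 1)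
    (c : Fin K → Fin n → ℝ)
    (opt : Fin K → ℝ)
    (hopt : ∀ k, opt k = X.inf' hX fun x => ∑ i, c k i * x i)
    (r : (Fin n → ℝ) → Fin K → ℝ)
    (hr : ∀ x k, r x k = (∑ i, c k i * x i) - opt k)
    (w : Fin K → ℝ) (hw0 : ∀ k, 0 ≤ w k) (hw1 : ∀ k, w k ≤ 1)
    (hwsum : ∑ k, w k = 1)
    (hwmono : Monotone w)
    (hzero : ∀ k : Fin K, (k : ℕ) < K - L → w k = 0)
    (x : Fin n → ℝ) (hx : x ∈ X)
    (π : Equiv.Perm (Fin K)) (hπ : Antitone fun k => r x (π k)) :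
    IsLeast
      {t : ℝ | ∃ s : Fin L → Fin K, Function.Injective s ∧
        ∃ τ : Equiv.Perm (Fin L),
          t = ∑ k : Fin L,
            w (⟨(τ k : ℕ) + (K - L), by have := (τ k).isLt; omega⟩ : Fin K) * r x (s k)}
      (∑ k, w k * r x (π k)) := by
  let e : Fin L ↪ Fin K :=
    ⟨fun j => ⟨(j : ℕ) + (K - L), by have := j.isLt; omega⟩, fun a b h => by
      have := congrArg Fin.val h
      apply Fin.ext
      simp only at this
      omega⟩
  have he : ∀ k, k ∉ Set.range e → w k = 0 := by
    intro k hk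
    apply hzero
    by_contra hlt
    have hk' := k.isLt
    exact hk
      ⟨⟨(k : ℕ) - (K - L), by omega⟩, Fin.ext (Nat.sub_add_cancel (not_lt.mp hlt))⟩
  constructor
  · refine ⟨fun j => π (e j), π.injective.comp e.injective, 1, ?_⟩
    exact sum_eq_sum_comp_of_weight_zero e w (fun k => r x (π k)) he
  · rintro t ⟨s, hs, τ, rfl⟩
    obtain ⟨σ, hσ⟩ := exists_perm_comp_eq (τ.toEmbedding.trans e) ⟨s, hs⟩
    have hsum : ∑ k : Fin L, w (e (τ k)) * r x (s k) = ∑ k, w k * r x (σ k) := by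
      rw [sum_eq_sum_comp_of_weight_zero e w (fun k => r x (σ k)) he,
        ← Equiv.sum_comp τ fun j => w (e j) * r x (σ (e j))]
      refine Finset.sum_congr rfl fun k _ => ?_
      have := hσ k
      simp only [Function.Embedding.trans_apply, Function.Embedding.coeFn_mk] at this
      change σ (e (τ k)) = s k at this
      rw [this]
    have hanti : Antivary w fun k => r x (π k) := hwmono.antivary hπ
    have hle := hanti.sum_mul_le_sum_mul_comp_perm (σ := σ.trans π.symm)
    simp only [Equiv.trans_apply, Equiv.apply_symm_apply] at hle
    exact hle.trans_eq hsum.symm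
end

section
/- Let K = ℓ·m for positive integers ℓ, m. Let w ∈ [0,1]^K with Σ_{k=1}^K w_k = 1 be nonincreasing (w_i ≥ w_{i+1} for all i ∈ {1,…,K−1}) and let a ∈ ℝ^K be a nonzero vector with nonnegative entries. Define the aggregated vectors ā ∈ ℝ^m by ā_k = (a_{(k−1)ℓ+1} + … + a_{kℓ})/ℓ and w̄ ∈ ℝ^m by w̄_k = w_{(k−1)ℓ+1} + … + w_{kℓ} for k ∈ {1,…,m}, and let ρ = max_{k∈{1,…,m}} (Σ_{i=1}^k w_i) / (Σ_{i=1}^k w̄_i). Then OWA_{w̄}(ā) ≤ OWA_w(a) ≤ ℓ·ρ·OWA_{w̄}(ā). -/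
/-!
Reindex `Fin (ℓ * m)` by (block, offset) pairs.

Lower bound: `ℓ * ∑ k, wbar k * abar (σ k)` is the sum, over the cyclic shifts `s` of the
offsets, of `∑ i, w i * a (q i)`, where the permutation `q` sends `(k, j)` to `(σ k, j + s)`.
The rearrangement inequality bounds each of these by `∑ k, w k * a (π k)`.

Upper bound: let `S B = ℓ * abar B` be the sum of `a` over block `B`, and let `τ B` be the best
rank in the sorted order `π` of an entry of block `B`. As `w` is antitone, replacing each rank by
the best rank in its block gives `∑ k, w k * a (π k) ≤ ∑ B, w (τ B) * S B`. The ranks `τ B` are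
distinct, so by rearrangement this is at most `∑ k, w k * S (σ k)`, summed over the first `m`
indices (`sum_injective_le`). By definition of `ρ`, every partial sum of `w` is at most `ρ` times
that of `wbar`, and summation by parts against the antitone nonnegative `S ∘ σ` finishes
(`sum_mul_nonneg_of_partial`).
-/

/-- Summation by parts: nonnegative partial sums against an antitone nonnegative sequence. -/
lemma sum_mul_nonneg_of_partial {m : ℕ} (d s : Fin m → ℝ) (hs : Antitone s)
    (hs0 : ∀ i, 0 ≤ s i)
    (hd : ∀ k : Fin m, 0 ≤ ∑ i : Fin m, if (i : ℕ) ≤ (k : ℕ) then d i else 0) :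
    0 ≤ ∑ i, d i * s i := by
  -- The bound by the last value of `s` times the full sum of `d` is what the induction carries.
  have key : ∀ (n : ℕ) (d s : Fin (n + 1) → ℝ), Antitone s →
      (∀ k : Fin (n + 1), 0 ≤ ∑ i : Fin (n + 1), if (i : ℕ) ≤ (k : ℕ) then d i else 0) →
      s (Fin.last n) * ∑ i, d i ≤ ∑ i, d i * s i := by
    intro n
    induction n with
    | zero => intro d s _ _; simp [mul_comm]
    | succ n ih =>
      intro d s hs hd
      have hpart : ∀ k : Fin (n + 1),
          0 ≤ ∑ i : Fin (n + 1), if (i : ℕ) ≤ (k : ℕ) then d i.castSucc else 0 := by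
        intro k
        have h := hd k.castSucc
        rw [Fin.sum_univ_castSucc] at h
        have hk : ¬ (n + 1 ≤ (k : ℕ)) := by omega
        simpa [hk] using h
      have h1 := ih (fun i => d i.castSucc) (fun i => s i.castSucc)
        (fun i j hij => hs (Fin.castSucc_le_castSucc_iff.mpr hij)) hpart
      have h2 : 0 ≤ ∑ i : Fin (n + 1), d i.castSucc := by
        have h := hpart (Fin.last n)
        have e : ∀ i : Fin (n + 1), (i : ℕ) ≤ n := fun i => by omega
        simpa [e] using h
      have h3 : s (Fin.last (n + 1)) ≤ s (Fin.last n).castSucc := hs (Fin.le_last _)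
      rw [Fin.sum_univ_castSucc, Fin.sum_univ_castSucc (n := n + 1)]
      have h4 := mul_le_mul_of_nonneg_right h3 h2
      linarith [mul_comm (d (Fin.last (n + 1))) (s (Fin.last (n + 1)))]
  cases m with
  | zero => simp
  | succ n =>
    refine le_trans (mul_nonneg (hs0 _) ?_) (key n d s hs hd)
    have h := hd (Fin.last n)
    have e : ∀ i : Fin (n + 1), (i : ℕ) ≤ n := fun i => by omega
    simpa [e] using h

/-- Among injective choices of `m` of the `K` weights, the first `m` weights in order maximize the
pairing with an antitone nonnegative vector. -/
lemma sum_injective_le {m K : ℕ} (hmK : m ≤ K) (w : Fin K → ℝ) (hw : Antitone w)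
    (t : Fin m → ℝ) (ht : Antitone t) (ht0 : ∀ i, 0 ≤ t i)
    (τ : Fin m → Fin K) (hτ : Function.Injective τ) :
    ∑ i, w (τ i) * t i ≤ ∑ i, w (Fin.castLE hmK i) * t i := by
  -- `t` padded with zeros stays antitone, since `t` is nonnegative.
  let f : Fin K → ℝ := fun i => if h : (i : ℕ) < m then t ⟨i, h⟩ else 0
  have hf : Antitone f := by
    intro i j hij
    have hij' : (i : ℕ) ≤ j := hij
    by_cases hj : (j : ℕ) < m
    · have hi : (i : ℕ) < m := by omega
      simp only [f, hi, hj, dif_pos]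
      exact ht hij'
    · by_cases hi : (i : ℕ) < m
      · simp only [f, hi, hj, dif_pos, dif_neg, not_false_eq_true]
        exact ht0 _
      · simp [f, hi, hj]
  have hfc : ∀ i, f (Fin.castLE hmK i) = t i := by intro i; simp [f]
  have hf0 : ∀ i, i ∉ Set.range (Fin.castLE hmK) → f i = 0 := by
    intro i hi
    have : ¬ (i : ℕ) < m := fun h => hi ⟨⟨i, h⟩, rfl⟩
    simp [f, this]
  have hc : Function.Injective (Fin.castLE hmK) := Fin.castLE_injective hmK
  obtain ⟨q, hq⟩ : ∃ q : Equiv.Perm (Fin K), ∀ i, q (Fin.castLE hmK i) = τ i := by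
    classical
    let e : {x // x ∈ Set.range (Fin.castLE hmK)} ≃ {x // x ∈ Set.range τ} :=
      (Equiv.ofInjective _ hc).symm.trans (Equiv.ofInjective _ hτ)
    refine ⟨e.extendSubtype, fun i => ?_⟩
    rw [Equiv.extendSubtype_apply_of_mem e _ ⟨i, rfl⟩]
    change ((Equiv.ofInjective _ hτ)
      ((Equiv.ofInjective _ hc).symm (Equiv.ofInjective _ hc i)) : Fin K) = τ i
    rw [Equiv.symm_apply_apply]
    rfl
  have hsum : ∀ g : Fin K → ℝ, ∑ i, g (Fin.castLE hmK i) * t i = ∑ i, g i * f i := by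
    intro g
    refine Finset.sum_of_injOn (Fin.castLE hmK) hc.injOn (by simp) ?_ ?_
    · intro i _ hi
      rw [hf0 i (by simpa using hi), mul_zero]
    · intro i _
      rw [hfc]
  have hre := (hw.monovary hf).sum_comp_perm_mul_le_sum_mul (σ := q)
  have h1 := hsum (fun i => w (q i))
  simp only [hq] at h1
  rw [h1, hsum w]
  exact hre


/-- Aggregation bounds for OWA (Lemma 1): for K = ℓ·m, nonincreasing weights w
and a nonzero nonnegative vector a, with block-averaged vector ā, block-summed weights w̄ and
ρ = max_k (Σ_{i∈[k]} w_i)/(Σ_{i∈[k]} w̄_i), we have OWA_{w̄}(ā) ≤ OWA_w(a) ≤ ℓ·ρ·OWA_{w̄}(ā).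
The function `idx` sends block k and offset j to the index (k−1)ℓ+j of {1,…,K}. -/
theorem owa_aggregation_bounds
    (ℓ m : ℕ) (hl : 0 < ℓ) (hm : 0 < m)
    (idx : Fin m → Fin ℓ → Fin (ℓ * m))
    (hidx : ∀ k j, ((idx k j : ℕ)) = (k : ℕ) * ℓ + (j : ℕ))
    (w : Fin (ℓ * m) → ℝ) (hw0 : ∀ k, 0 ≤ w k) (hw1 : ∀ k, w k ≤ 1)
    (hwsum : ∑ k, w k = 1) (hwanti : Antitone w)
    (a : Fin (ℓ * m) → ℝ) (ha0 : ∀ k, 0 ≤ a k) (hane : a ≠ 0)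
    (abar : Fin m → ℝ)
    (habar : ∀ k, abar k = (∑ j : Fin ℓ, a (idx k j)) / (ℓ : ℝ))
    (wbar : Fin m → ℝ)
    (hwbar : ∀ k, wbar k = ∑ j : Fin ℓ, w (idx k j))
    (ρ : ℝ)
    (hρ : ρ = (Finset.univ : Finset (Fin m)).sup' ⟨⟨0, hm⟩, Finset.mem_univ _⟩
      (fun k => (∑ i : Fin (ℓ * m), if (i : ℕ) ≤ (k : ℕ) then w i else 0) /
        (∑ i : Fin m, if (i : ℕ) ≤ (k : ℕ) then wbar i else 0)))
    (π : Equiv.Perm (Fin (ℓ * m))) (hπ : Antitone fun k => a (π k))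
    (σ : Equiv.Perm (Fin m)) (hσ : Antitone fun k => abar (σ k)) :
    ∑ k, wbar k * abar (σ k) ≤ ∑ k, w k * a (π k) ∧
      ∑ k, w k * a (π k) ≤ (ℓ : ℝ) * ρ * ∑ k, wbar k * abar (σ k) := by
  have : NeZero ℓ := ⟨hl.ne'⟩
  have hlR : (0 : ℝ) < ℓ := by exact_mod_cast hl
  have hinj : Function.Injective (fun p : Fin m × Fin ℓ => idx p.1 p.2) := by
    rintro ⟨k, j⟩ ⟨k', j'⟩ h
    have h' : (k : ℕ) * ℓ + j = k' * ℓ + j' := by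
      rw [← hidx, ← hidx]; exact congrArg Fin.val h
    have hk : (k : ℕ) = k' := by
      have h2 := congrArg (· / ℓ) h'
      simpa [Nat.add_div_of_dvd_right, Nat.mul_div_cancel _ hl,
        Nat.div_eq_of_lt j.isLt, Nat.div_eq_of_lt j'.isLt] using h2
    have hj : (j : ℕ) = j' := by rw [hk] at h'; omega
    exact Prod.ext (Fin.ext hk) (Fin.ext hj)
  let e : Fin m × Fin ℓ ≃ Fin (ℓ * m) := Equiv.ofBijective _
    ((Fintype.bijective_iff_injective_and_card _).mpr ⟨hinj, by simp [mul_comm]⟩)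
  have he : ∀ k j, e (k, j) = idx k j := fun _ _ => rfl
  have hS : ∀ k, (ℓ : ℝ) * abar k = ∑ j, a (idx k j) := by
    intro k; rw [habar]; field_simp
  constructor
  · have hshift : ∀ s : Fin ℓ,
        ∑ k, ∑ j, w (idx k j) * a (idx (σ k) (j + s)) ≤ ∑ k, w k * a (π k) := by
      intro s
      let q : Equiv.Perm (Fin (ℓ * m)) :=
        (e.symm.trans (Equiv.prodCongr σ (Equiv.addRight s))).trans e
      have h := (hwanti.monovary hπ).sum_mul_comp_perm_le_sum_mul (σ := q.trans π.symm)
      simp only [Equiv.trans_apply, Equiv.apply_symm_apply] at h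
      refine le_trans (le_of_eq ?_) h
      rw [← Equiv.sum_comp e, Fintype.sum_prod_type]
      simp [q, ← he]
    have hall : (ℓ : ℝ) * ∑ k, wbar k * abar (σ k)
        = ∑ s : Fin ℓ, ∑ k, ∑ j, w (idx k j) * a (idx (σ k) (j + s)) := by
      rw [Finset.sum_comm, Finset.mul_sum]
      refine Finset.sum_congr rfl fun k _ => ?_
      rw [Finset.sum_comm, hwbar, mul_left_comm, hS, Finset.sum_mul]
      refine Finset.sum_congr rfl fun j _ => ?_
      rw [← Finset.mul_sum, ← Equiv.sum_comp (Equiv.addLeft j)]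
      rfl
    have hle := Finset.sum_le_sum fun s (_ : s ∈ Finset.univ) => hshift s
    rw [← hall, Finset.sum_const, Finset.card_univ, Fintype.card_fin, nsmul_eq_mul] at hle
    exact le_of_mul_le_mul_left hle hlR
  · have hmK : m ≤ ℓ * m := Nat.le_mul_of_pos_left m hl
    -- `jm B` is the offset of an entry of block `B` that comes first in the order `π`.
    have hmin : ∀ B : Fin m, ∃ j0 : Fin ℓ, ∀ j,
        π.symm (idx B j0) ≤ π.symm (idx B j) := fun B => Finite.exists_min _
    choose jm hjm using hmin
    have hSa : Antitone fun k => (ℓ : ℝ) * abar (σ k) :=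
      fun i j hij => mul_le_mul_of_nonneg_left (hσ hij) hlR.le
    have hS0 : ∀ k, 0 ≤ (ℓ : ℝ) * abar (σ k) := by
      intro k; rw [hS]; exact Finset.sum_nonneg fun _ _ => ha0 _
    have hτ : Function.Injective fun k => π.symm (idx (σ k) (jm (σ k))) := by
      intro k k' h
      exact σ.injective (congrArg Prod.fst
        (hinj (a₁ := (σ k, jm (σ k))) (a₂ := (σ k', jm (σ k'))) (π.symm.injective h)))
    have h1 : ∑ k, w k * a (π k)
        ≤ ∑ k, w (π.symm (idx (σ k) (jm (σ k)))) * ((ℓ : ℝ) * abar (σ k)) := by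
      rw [Equiv.sum_comp σ (fun B => w (π.symm (idx B (jm B))) * ((ℓ : ℝ) * abar B)),
        ← Equiv.sum_comp π.symm, ← Equiv.sum_comp e, Fintype.sum_prod_type]
      refine Finset.sum_le_sum fun B _ => ?_
      rw [hS, Finset.mul_sum]
      refine Finset.sum_le_sum fun j _ => ?_
      rw [Equiv.apply_symm_apply, he]
      exact mul_le_mul_of_nonneg_right (hwanti (hjm B j)) (ha0 _)
    have h2 := sum_injective_le hmK w hwanti _ hSa hS0 _ hτ
    -- The largest weight is positive, so the denominators in `ρ` do not vanish.
    have hw_pos : 0 < w (idx ⟨0, hm⟩ 0) := by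
      by_contra hcon
      have hz : ∀ k, w k = 0 := fun k => by
        have hk : idx ⟨0, hm⟩ 0 ≤ k := by
          rw [Fin.le_def, hidx]; simp
        linarith [hw0 k, hwanti hk]
      simp [hz] at hwsum
    have hwbar0 : ∀ k, 0 ≤ wbar k := fun k => by
      rw [hwbar]; exact Finset.sum_nonneg fun _ _ => hw0 _
    have hwbar_pos : 0 < wbar ⟨0, hm⟩ := by
      rw [hwbar]
      exact lt_of_lt_of_le hw_pos
        (Finset.single_le_sum (f := fun j => w (idx ⟨0, hm⟩ j)) (fun _ _ => hw0 _)
          (Finset.mem_univ 0))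
    have hpart : ∀ k : Fin m, 0 ≤ ∑ i : Fin m,
        if (i : ℕ) ≤ (k : ℕ) then ρ * wbar i - w (Fin.castLE hmK i) else 0 := by
      intro k
      have hden : 0 < ∑ i : Fin m, if (i : ℕ) ≤ (k : ℕ) then wbar i else 0 := by
        refine Finset.sum_pos' (fun i _ => ?_) ⟨⟨0, hm⟩, Finset.mem_univ _, by simpa⟩
        split_ifs
        exacts [hwbar0 i, le_rfl]
      have hle : (∑ i : Fin (ℓ * m), if (i : ℕ) ≤ (k : ℕ) then w i else 0) /
          (∑ i : Fin m, if (i : ℕ) ≤ (k : ℕ) then wbar i else 0) ≤ ρ := by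
        rw [hρ]
        exact Finset.le_sup' (fun k : Fin m =>
          (∑ i : Fin (ℓ * m), if (i : ℕ) ≤ (k : ℕ) then w i else 0) /
          (∑ i : Fin m, if (i : ℕ) ≤ (k : ℕ) then wbar i else 0)) (Finset.mem_univ k)
      rw [div_le_iff₀ hden] at hle
      have hnum : (∑ i : Fin m, if (i : ℕ) ≤ (k : ℕ) then w (Fin.castLE hmK i) else 0)
          = ∑ i : Fin (ℓ * m), if (i : ℕ) ≤ (k : ℕ) then w i else 0 := by
        refine Finset.sum_of_injOn (Fin.castLE hmK) (Fin.castLE_injective hmK).injOn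
          (by simp) ?_ ?_
        · intro i _ hi
          refine if_neg fun hik => hi ?_
          exact ⟨⟨i, lt_of_le_of_lt hik k.isLt⟩, by simp, rfl⟩
        · intro i _; rfl
      have hsplit : (∑ i : Fin m,
          if (i : ℕ) ≤ (k : ℕ) then ρ * wbar i - w (Fin.castLE hmK i) else 0)
          = ρ * (∑ i : Fin m, if (i : ℕ) ≤ (k : ℕ) then wbar i else 0)
            - ∑ i : Fin m, if (i : ℕ) ≤ (k : ℕ) then w (Fin.castLE hmK i) else 0 := by
        rw [Finset.mul_sum, ← Finset.sum_sub_distrib]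
        refine Finset.sum_congr rfl fun i _ => ?_
        split_ifs <;> simp
      rw [hsplit, hnum]
      linarith
    have h3 := sum_mul_nonneg_of_partial _ _ hSa hS0 hpart
    have h4 : ∑ i, (ρ * wbar i - w (Fin.castLE hmK i)) * ((ℓ : ℝ) * abar (σ i))
        = (ℓ : ℝ) * ρ * (∑ k, wbar k * abar (σ k))
          - ∑ i, w (Fin.castLE hmK i) * ((ℓ : ℝ) * abar (σ i)) := by
      rw [Finset.mul_sum, ← Finset.sum_sub_distrib]
      exact Finset.sum_congr rfl fun i _ => by ring
    linarith
end

section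
/- Let K = ℓ·m for positive integers ℓ, m, and let w ∈ [0,1]^K with Σ_{k=1}^K w_k = 1 be nonincreasing (w_i ≥ w_{i+1} for all i ∈ {1,…,K−1}). Define the aggregated cost vectors c̄^k = (1/ℓ) Σ_{j=1}^ℓ c^{(k−1)ℓ+j} ∈ ℝ^n, the aggregated optimal values ō_k = (1/ℓ) Σ_{j=1}^ℓ opt_{(k−1)ℓ+j}, the aggregated weights w̄_k = w_{(k−1)ℓ+1} + … + w_{kℓ} for k ∈ {1,…,m}, and ρ = max_{k∈{1,…,m}} (Σ_{i=1}^k w_i)/(Σ_{i=1}^k w̄_i). For x ∈ X let r̄_k(x) = Σ_{i=1}^n c̄^k_i x_i − ō_k. Then for every x ∈ X, OWA_{w̄}(r̄_1(x),…,r̄_m(x)) ≤ OWAR_w(x) ≤ ℓ·ρ·OWA_{w̄}(r̄_1(x),…,r̄_m(x)). -/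
/-!
Write `R k = ∑ j, r (idx k j)` for the total regret of block `k`, so that `R k = ℓ * rbar k`.

Lower bound: for each cyclic shift `s` of `Fin ℓ`, sending position `(k, j)` to scenario
`(σ k, j + s)` is a bijection between the `ℓ * m` positions and the `ℓ * m` scenarios. By the
rearrangement inequality, the corresponding weighted sum of regrets is at most the OWA regret,
which pairs the weights and the regrets in the same order. Averaging over the `ℓ` shifts gives
exactly the OWA of the aggregated regrets.

Upper bound: regrets are nonnegative, so within block `k` every weight can be replaced by the
largest weight that the block receives in the OWA sum, which sits at a position `p k`. This bounds
the OWA regret by `∑ k, w (p k) * R k`. The positions `p k` are distinct, so any `k + 1` of the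
weights `w (p _)` sum to at most the `k + 1` largest weights (`sum_comp_le_prefix_sum`), which is
at most `ρ` times the corresponding prefix sum of `wbar`. Summation by parts
(`sum_mul_le_of_prefix_le`) against the nonincreasing nonnegative sequence `R (σ k)` transfers
this prefix comparison to the full sums.
-/

/-- Summation by parts in the form of an inequality: a sequence with nonnegative prefix sums has
nonnegative pairing with a nonincreasing nonnegative sequence. -/
lemma sum_mul_nonneg_of_prefix_nonneg : ∀ (m : ℕ) (d b : Fin m → ℝ), Antitone b → (∀ i, 0 ≤ b i) →
    (∀ k : Fin m, 0 ≤ ∑ i : Fin m, if (i : ℕ) ≤ (k : ℕ) then d i else 0) →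
    0 ≤ ∑ i, d i * b i
  | 0, _, _, _, _, _ => by simp
  | m + 1, d, b, hb, hb0, h => by
    -- Subtract the last value of `b`; the differences form a sequence of length `m`.
    have ih := sum_mul_nonneg_of_prefix_nonneg m (fun i => d i.castSucc)
      (fun i => b i.castSucc - b (Fin.last m))
      (fun i j hij => sub_le_sub_right (hb (Fin.castSucc_le_castSucc_iff.2 hij)) _)
      (fun i => sub_nonneg.2 (hb (Fin.le_last _)))
      (fun k => by
        have := h k.castSucc
        rw [Fin.sum_univ_castSucc] at this
        simpa [not_le.2 k.isLt] using this)
    have hl := h (Fin.last m)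
    have hall : (∑ i : Fin (m + 1), if (i : ℕ) ≤ (Fin.last m : ℕ) then d i else 0) = ∑ i, d i :=
      Finset.sum_congr rfl fun i _ => if_pos (Fin.le_last i)
    rw [hall] at hl
    have key : ∑ i, d i * b i = (∑ i : Fin m, d i.castSucc * (b i.castSucc - b (Fin.last m)))
        + (∑ i, d i) * b (Fin.last m) := by
      rw [Fin.sum_univ_castSucc, Fin.sum_univ_castSucc (f := d), add_mul, Finset.sum_mul,
        ← add_assoc, ← Finset.sum_add_distrib]
      congr 1
      exact Finset.sum_congr rfl fun i _ => by ring
    rw [key]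
    exact add_nonneg ih (mul_nonneg hl (hb0 _))

lemma sum_mul_le_of_prefix_le {m : ℕ} (u v b : Fin m → ℝ) (hb : Antitone b) (hb0 : ∀ i, 0 ≤ b i)
    (h : ∀ k : Fin m, (∑ i : Fin m, if (i : ℕ) ≤ (k : ℕ) then u i else 0) ≤
      ∑ i : Fin m, if (i : ℕ) ≤ (k : ℕ) then v i else 0) :
    ∑ i, u i * b i ≤ ∑ i, v i * b i := by
  have := sum_mul_nonneg_of_prefix_nonneg m (fun i => v i - u i) b hb hb0 (fun k => by
    have e : (∑ i : Fin m, if (i : ℕ) ≤ (k : ℕ) then v i - u i else 0) =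
        (∑ i : Fin m, if (i : ℕ) ≤ (k : ℕ) then v i else 0) -
          ∑ i : Fin m, if (i : ℕ) ≤ (k : ℕ) then u i else 0 := by
      rw [← Finset.sum_sub_distrib]
      exact Finset.sum_congr rfl fun i _ => by split_ifs <;> simp
    rw [e]
    exact sub_nonneg.2 (h k))
  simp only [sub_mul, Finset.sum_sub_distrib] at this
  linarith

lemma card_filter_val_le {N k : ℕ} (hk : k < N) :
    (Finset.univ.filter fun i : Fin N => (i : ℕ) ≤ k).card = k + 1 := by
  have : (Finset.univ.filter fun i : Fin N => (i : ℕ) ≤ k) = Finset.Iic ⟨k, hk⟩ := by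
    ext i; simp [Fin.le_def]
  rw [this, Fin.card_Iic]

/-- For nonincreasing `w`, the values at `k + 1` distinct positions sum to at most the first
`k + 1` values. -/
lemma sum_comp_le_prefix_sum {m N : ℕ} (hmN : m ≤ N) (w : Fin N → ℝ) (hw : Antitone w)
    (q : Fin m → Fin N) (hq : Function.Injective q) (k : Fin m) :
    (∑ i : Fin m, if (i : ℕ) ≤ (k : ℕ) then w (q i) else 0) ≤
      ∑ i : Fin N, if (i : ℕ) ≤ (k : ℕ) then w i else 0 := by
  have hkN : (k : ℕ) < N := k.isLt.trans_le hmN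
  -- Both sums have `k + 1` terms, so they may be compared after subtracting the threshold `t`;
  -- the first `k + 1` positions are those that contribute the positive parts of `w - t`.
  set t := w ⟨k, hkN⟩ with ht
  have h1 : ∑ i ∈ Finset.univ.filter (fun i : Fin m => (i : ℕ) ≤ k), (w (q i) - t) ≤
      ∑ i ∈ Finset.univ.filter (fun i : Fin N => (i : ℕ) ≤ k), (w i - t) := by
    calc _ ≤ ∑ i ∈ Finset.univ.filter (fun i : Fin m => (i : ℕ) ≤ k), max (w (q i) - t) 0 :=
          Finset.sum_le_sum fun i _ => le_max_left _ _
      _ ≤ ∑ i, max (w (q i) - t) 0 :=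
          Finset.sum_le_sum_of_subset_of_nonneg (Finset.filter_subset _ _)
            fun _ _ _ => le_max_right _ _
      _ = ∑ i ∈ Finset.univ.map ⟨q, hq⟩, max (w i - t) 0 := by simp
      _ ≤ ∑ i, max (w i - t) 0 :=
          Finset.sum_le_sum_of_subset_of_nonneg (Finset.subset_univ _)
            fun _ _ _ => le_max_right _ _
      _ = _ := by
          rw [Finset.sum_filter]
          refine Finset.sum_congr rfl fun i _ => ?_
          split_ifs with h
          · exact max_eq_left (sub_nonneg.2 (hw (Fin.le_def.2 h)))
          · exact max_eq_right (sub_nonpos.2 (hw (Fin.le_def.2 (not_le.1 h).le)))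
  rw [Finset.sum_sub_distrib, Finset.sum_sub_distrib, Finset.sum_const, Finset.sum_const,
    card_filter_val_le k.isLt, card_filter_val_le hkN] at h1
  rw [← Finset.sum_filter, ← Finset.sum_filter]
  linarith


/-- Aggregation bounds for OWA regret (Theorem 2): for K = ℓ·m and nonincreasing
weights, with aggregated scenarios c̄^k, aggregated optimal values ō_k, aggregated weights w̄
and ρ as defined, OWA_{w̄}(r̄(x)) ≤ OWAR_w(x) ≤ ℓ·ρ·OWA_{w̄}(r̄(x)) for every x ∈ X.
The function `idx` sends block k and offset j to the index (k−1)ℓ+j of {1,…,K}. -/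
theorem owar_aggregation_bounds
    (n ℓ m : ℕ) (hn : 0 < n) (hl : 0 < ℓ) (hm : 0 < m)
    (X : Finset (Fin n → ℝ)) (hX : X.Nonempty)
    (hbin : ∀ x ∈ X, ∀ i, x i = 0 ∨ x i = 1)
    (c : Fin (ℓ * m) → Fin n → ℝ)
    (opt : Fin (ℓ * m) → ℝ)
    (hopt : ∀ k, opt k = X.inf' hX fun x => ∑ i, c k i * x i)
    (r : (Fin n → ℝ) → Fin (ℓ * m) → ℝ)
    (hr : ∀ x k, r x k = (∑ i, c k i * x i) - opt k)
    (w : Fin (ℓ * m) → ℝ) (hw0 : ∀ k, 0 ≤ w k) (hw1 : ∀ k, w k ≤ 1)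
    (hwsum : ∑ k, w k = 1) (hwanti : Antitone w)
    (idx : Fin m → Fin ℓ → Fin (ℓ * m))
    (hidx : ∀ k j, ((idx k j : ℕ)) = (k : ℕ) * ℓ + (j : ℕ))
    (cbar : Fin m → Fin n → ℝ)
    (hcbar : ∀ k i, cbar k i = (∑ j : Fin ℓ, c (idx k j) i) / (ℓ : ℝ))
    (obar : Fin m → ℝ)
    (hobar : ∀ k, obar k = (∑ j : Fin ℓ, opt (idx k j)) / (ℓ : ℝ))
    (wbar : Fin m → ℝ)
    (hwbar : ∀ k, wbar k = ∑ j : Fin ℓ, w (idx k j))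
    (ρ : ℝ)
    (hρ : ρ = (Finset.univ : Finset (Fin m)).sup' ⟨⟨0, hm⟩, Finset.mem_univ _⟩
      (fun k => (∑ i : Fin (ℓ * m), if (i : ℕ) ≤ (k : ℕ) then w i else 0) /
        (∑ i : Fin m, if (i : ℕ) ≤ (k : ℕ) then wbar i else 0)))
    (rbar : (Fin n → ℝ) → Fin m → ℝ)
    (hrbar : ∀ x k, rbar x k = (∑ i, cbar k i * x i) - obar k)
    (x : Fin n → ℝ) (hx : x ∈ X)
    (π : Equiv.Perm (Fin (ℓ * m))) (hπ : Antitone fun k => r x (π k))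
    (σ : Equiv.Perm (Fin m)) (hσ : Antitone fun k => rbar x (σ k)) :
    ∑ k, wbar k * rbar x (σ k) ≤ ∑ k, w k * r x (π k) ∧
      ∑ k, w k * r x (π k) ≤ (ℓ : ℝ) * ρ * ∑ k, wbar k * rbar x (σ k) := by
  have hl' : (0 : ℝ) < ℓ := Nat.cast_pos.2 hl
  have hmN : m ≤ ℓ * m := Nat.le_mul_of_pos_left m hl
  have hN : 0 < ℓ * m := Nat.mul_pos hl hm
  have hr0 : ∀ k, 0 ≤ r x k := fun k => by
    rw [hr, hopt, sub_nonneg]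
    exact Finset.inf'_le (fun y => ∑ i, c k i * y i) hx
  have hrb : ∀ k, rbar x k = (∑ j : Fin ℓ, r x (idx k j)) / ℓ := fun k => by
    rw [hrbar, hobar]
    simp only [hr, hcbar]
    rw [Finset.sum_sub_distrib, Finset.sum_comm, sub_div]
    congr 1
    rw [Finset.sum_div]
    exact Finset.sum_congr rfl fun i _ => by rw [← Finset.sum_mul]; ring
  have hinj : Function.Injective fun p : Fin m × Fin ℓ => idx p.1 p.2 := by
    rintro ⟨k, j⟩ ⟨k', j'⟩ h
    have h' : (k : ℕ) * ℓ + j = k' * ℓ + j' := by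
      rw [← hidx, ← hidx]; exact congrArg Fin.val h
    have hk : (k : ℕ) = k' := by
      have := congrArg (· / ℓ) h'
      simpa [add_comm, Nat.add_mul_div_right _ _ hl,
        Nat.div_eq_of_lt j.isLt, Nat.div_eq_of_lt j'.isLt] using this
    have hj : (j : ℕ) = j' := by rw [hk] at h'; omega
    exact Prod.ext (Fin.ext hk) (Fin.ext hj)
  have hbij : Function.Bijective fun p : Fin m × Fin ℓ => idx p.1 p.2 :=
    (Fintype.bijective_iff_injective_and_card _).2 ⟨hinj, by simp [mul_comm]⟩
  let e : Fin m × Fin ℓ ≃ Fin (ℓ * m) := Equiv.ofBijective _ hbij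
  have he : ∀ k j, e (k, j) = idx k j := fun _ _ => rfl
  have hsum : ∀ f : Fin (ℓ * m) → ℝ, ∑ i, f i = ∑ k, ∑ j, f (idx k j) := fun f => by
    rw [← e.sum_comp, Fintype.sum_prod_type]
    rfl
  have : NeZero ℓ := ⟨hl.ne'⟩
  constructor
  · have hshift : ∀ s : Fin ℓ, ∑ k, ∑ j, w (idx k j) * r x (idx (σ k) (j + s)) ≤
        ∑ k, w k * r x (π k) := fun s => by
      let τ : Equiv.Perm (Fin (ℓ * m)) :=
        ((e.symm.trans (Equiv.prodCongr σ (Equiv.addRight s))).trans e).trans π.symm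
      have h := (hwanti.monovary hπ).sum_mul_comp_perm_le_sum_mul (σ := τ)
      refine le_trans (le_of_eq ?_) h
      rw [hsum]
      refine Finset.sum_congr rfl fun k _ => Finset.sum_congr rfl fun j _ => ?_
      have : π (τ (idx k j)) = idx (σ k) (j + s) := by
        simp [τ, ← he]
      rw [this]
    have havg : (ℓ : ℝ) * ∑ k, wbar k * rbar x (σ k) =
        ∑ s : Fin ℓ, ∑ k, ∑ j, w (idx k j) * r x (idx (σ k) (j + s)) := by
      rw [Finset.sum_comm, Finset.mul_sum]
      refine Finset.sum_congr rfl fun k _ => ?_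
      rw [Finset.sum_comm, hrb, hwbar, Finset.sum_mul, Finset.mul_sum]
      refine Finset.sum_congr rfl fun j _ => ?_
      have hrot : ∑ s, r x (idx (σ k) (j + s)) = ∑ s, r x (idx (σ k) s) :=
        Equiv.sum_comp (Equiv.addLeft j) (fun i => r x (idx (σ k) i))
      rw [← Finset.mul_sum, hrot]
      field_simp
    have := Finset.sum_le_sum fun s (_ : s ∈ Finset.univ) => hshift s
    rw [← havg, Finset.sum_const, Finset.card_univ, Fintype.card_fin, nsmul_eq_mul] at this
    exact le_of_mul_le_mul_left this hl'
  · have hR : ∀ k, (ℓ : ℝ) * rbar x k = ∑ j : Fin ℓ, r x (idx k j) := fun k => by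
      rw [hrb]; field_simp
    have hrb0 : ∀ k, 0 ≤ rbar x k := fun k => by
      rw [hrb]; exact div_nonneg (Finset.sum_nonneg fun _ _ => hr0 _) hl'.le
    -- `J k` is an offset in block `k` whose scenario receives the largest weight.
    have hJ : ∀ k, ∃ J : Fin ℓ, ∀ j, w (π.symm (idx k j)) ≤ w (π.symm (idx k J)) := fun k => by
      obtain ⟨J, -, hJ⟩ := Finset.exists_max_image Finset.univ
        (fun j => w (π.symm (idx k j))) ⟨⟨0, hl⟩, Finset.mem_univ _⟩
      exact ⟨J, fun j => hJ j (Finset.mem_univ _)⟩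
    choose J hJ using hJ
    let p : Fin m → Fin (ℓ * m) := fun k => π.symm (idx k (J k))
    have hp : Function.Injective p := fun k k' h =>
      congrArg Prod.fst (@hinj (k, J k) (k', J k') (π.symm.injective h))
    have h1 : ∑ k, w k * r x (π k) ≤ ∑ k, w (p (σ k)) * (ℓ * rbar x (σ k)) := by
      rw [Equiv.sum_comp σ (fun k => w (p k) * (ℓ * rbar x k)), ← Equiv.sum_comp π.symm, hsum]
      refine Finset.sum_le_sum fun k _ => ?_
      rw [hR, Finset.mul_sum]
      refine Finset.sum_le_sum fun j _ => ?_
      rw [π.apply_symm_apply]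
      exact mul_le_mul_of_nonneg_right (hJ k j) (hr0 _)
    -- Positivity of `w 0` makes the denominators in the definition of `ρ` positive.
    have hwpos : 0 < w ⟨0, hN⟩ := by
      by_contra hneg
      have : ∑ k, w k ≤ 0 := Finset.sum_nonpos fun k _ =>
        (hwanti (Fin.le_def.2 (Nat.zero_le _))).trans (not_lt.1 hneg)
      linarith
    have hwb0 : ∀ k, 0 ≤ wbar k := fun k => by
      rw [hwbar]; exact Finset.sum_nonneg fun _ _ => hw0 _
    have hwbpos : 0 < wbar ⟨0, hm⟩ := by
      rw [hwbar]
      refine Finset.sum_pos' (fun _ _ => hw0 _) ⟨⟨0, hl⟩, Finset.mem_univ _, ?_⟩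
      have : idx ⟨0, hm⟩ ⟨0, hl⟩ = ⟨0, hN⟩ := Fin.ext (by simp [hidx])
      rwa [this]
    have hden : ∀ k : Fin m, 0 < ∑ i : Fin m, if (i : ℕ) ≤ (k : ℕ) then wbar i else 0 :=
      fun k => Finset.sum_pos' (fun i _ => by split_ifs <;> [exact hwb0 i; exact le_rfl])
        ⟨⟨0, hm⟩, Finset.mem_univ _, by simpa using hwbpos⟩
    have h2 : ∑ k, w (p (σ k)) * (ℓ * rbar x (σ k)) ≤
        ∑ k, (ρ * wbar k) * (ℓ * rbar x (σ k)) := by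
      refine sum_mul_le_of_prefix_le (fun k => w (p (σ k))) (fun k => ρ * wbar k)
        (fun k => ℓ * rbar x (σ k)) (fun i j hij => mul_le_mul_of_nonneg_left (hσ hij) hl'.le)
        (fun k => mul_nonneg hl'.le (hrb0 _)) fun k => ?_
      refine (sum_comp_le_prefix_sum hmN w hwanti (fun k => p (σ k))
        (hp.comp σ.injective) k).trans ?_
      have hk : (∑ i : Fin (ℓ * m), if (i : ℕ) ≤ (k : ℕ) then w i else 0) /
          (∑ i : Fin m, if (i : ℕ) ≤ (k : ℕ) then wbar i else 0) ≤ ρ := by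
        rw [hρ]
        exact Finset.le_sup' (fun k : Fin m =>
          (∑ i : Fin (ℓ * m), if (i : ℕ) ≤ (k : ℕ) then w i else 0) /
            (∑ i : Fin m, if (i : ℕ) ≤ (k : ℕ) then wbar i else 0)) (Finset.mem_univ k)
      rw [div_le_iff₀ (hden k), Finset.mul_sum] at hk
      simpa only [mul_ite, mul_zero] using hk
    refine (h1.trans h2).trans (le_of_eq ?_)
    rw [Finset.mul_sum]
    exact Finset.sum_congr rfl fun k _ => by ring
end

section
/- Let w ∈ [0,1]^K with Σ_{k=1}^K w_k = 1 be nonincreasing (w_i ≥ w_{i+1} for all i ∈ {1,…,K−1}). Define the midpoint cost vector c̄ = (1/K) Σ_{k=1}^K c^k ∈ ℝ^n and let x* ∈ X be any minimizer of the nominal problem with respect to c̄, i.e., Σ_{i=1}^n c̄_i x*_i = min_{x∈X} Σ_{i=1}^n c̄_i x_i. Then x* is a (w_1·K)-approximation for OWA regret: OWAR_w(x*) ≤ w_1·K·min_{x∈X} OWAR_w(x). -/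
/-! For nonnegative nonincreasing weights, OWA lies between two multiples of the plain sum of the
regrets: it is at most `w₁ · Σ_k r_k`, because every weight is at most `w₁`, and it is at least
`(1/K) · Σ_k r_k` by Chebyshev's sum inequality, because weights and sorted regrets are ordered the
same way. The midpoint solution minimizes `Σ_k v_k`, hence also `Σ_k r_k`, which differs from it by
the constant `Σ_k opt_k`; chaining the two bounds gives the factor `w₁ · K`. -/

/-- For nonincreasing weights w, any minimizer x* of the nominal problem with
respect to the midpoint scenario c̄ = (1/K) Σ_k c^k is a (w_1·K)-approximation for OWA regret:
OWAR_w(x*) ≤ w_1·K·min_{x∈X} OWAR_w(x). -/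
theorem midpoint_solution_is_w1K_approximation
    (n K : ℕ) (hn : 0 < n) (hK : 0 < K)
    (X : Finset (Fin n → ℝ)) (hX : X.Nonempty)
    (hbin : ∀ x ∈ X, ∀ i, x i = 0 ∨ x i = 1)
    (c : Fin K → Fin n → ℝ)
    (opt : Fin K → ℝ)
    (hopt : ∀ k, opt k = X.inf' hX fun x => ∑ i, c k i * x i)
    (r : (Fin n → ℝ) → Fin K → ℝ)
    (hr : ∀ x k, r x k = (∑ i, c k i * x i) - opt k)
    (w : Fin K → ℝ) (hw0 : ∀ k, 0 ≤ w k) (hw1 : ∀ k, w k ≤ 1)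
    (hwsum : ∑ k, w k = 1) (hwanti : Antitone w)
    (cbar : Fin n → ℝ)
    (hcbar : ∀ i, cbar i = (∑ k, c k i) / (K : ℝ))
    (σ : (Fin n → ℝ) → Equiv.Perm (Fin K))
    (hσ : ∀ y, Antitone fun k => r y (σ y k))
    (xstar : Fin n → ℝ) (hxstar : xstar ∈ X)
    (hmin : ∑ i, cbar i * xstar i = X.inf' hX fun y => ∑ i, cbar i * y i) :
    ∑ k, w k * r xstar (σ xstar k) ≤
      w (⟨0, hK⟩ : Fin K) * (K : ℝ) *
        X.inf' hX (fun y => ∑ k, w k * r y (σ y k)) := by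
  have hK' : (K : ℝ) ≠ 0 := by exact_mod_cast hK.ne'
  obtain ⟨y, hy, hyeq⟩ := X.exists_mem_eq_inf' hX (fun y => ∑ k, w k * r y (σ y k))
  rw [hyeq]
  have hnonneg : ∀ k, 0 ≤ r xstar k := fun k => by
    rw [hr, hopt]
    exact sub_nonneg.2 (Finset.inf'_le (fun x => ∑ i, c k i * x i) hxstar)
  have hsum : ∀ x : Fin n → ℝ, ∑ k, r x k = K * (∑ i, cbar i * x i) - ∑ k, opt k := fun x => by
    simp only [hr, Finset.sum_sub_distrib, hcbar]
    rw [Finset.sum_comm, Finset.mul_sum]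
    congr 1
    refine Finset.sum_congr rfl fun i _ => ?_
    rw [← Finset.sum_mul, ← mul_assoc, mul_div_cancel₀ _ hK']
  have hmid : ∑ k, r xstar k ≤ ∑ k, r y k := by
    rw [hsum, hsum, hmin]
    gcongr
    exact Finset.inf'_le (fun y => ∑ i, cbar i * y i) hy
  have hupper : ∑ k, w k * r xstar (σ xstar k) ≤ w ⟨0, hK⟩ * ∑ k, r xstar k := by
    rw [← Equiv.sum_comp (σ xstar) (r xstar), Finset.mul_sum]
    exact Finset.sum_le_sum fun k _ =>
      mul_le_mul_of_nonneg_right (hwanti (Nat.zero_le k.val)) (hnonneg _)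
  have hlower : ∑ k, r y k ≤ K * ∑ k, w k * r y (σ y k) := by
    have h := (hwanti.monovary (hσ y)).sum_mul_sum_le_card_mul_sum
    rwa [hwsum, one_mul, Equiv.sum_comp (σ y) (r y), Fintype.card_fin] at h
  calc _ ≤ w ⟨0, hK⟩ * ∑ k, r xstar k := hupper
    _ ≤ w ⟨0, hK⟩ * (K * ∑ k, w k * r y (σ y k)) :=
      mul_le_mul_of_nonneg_left (hmid.trans hlower) (hw0 _)
    _ = _ := (mul_assoc _ _ _).symm
end
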